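/- Let M be a 3-connected matroid such that |E(M)| >= 4 and M is neither a wheel nor a whirl, and let (e_1, ..., e_n) be a fan of M. If X ⊆ {e_1, ..., e_n} is a 3-separating set of M with |X| >= 3, then there are integers 1 <= x < y <= n such that X = {e_x, e_{x+1}, ..., e_y}. -/

import Mathlib

/-! In a 3-connected matroid, the intersection of two 3-separating sets is again 3-separating if
their union and its complement each have at least two elements, and likewise with union and
intersection exchanged. Hence every interval of the fan is 3-separating, and if at least two
elements lie outside the fan, then so is the intersection of `X` with any interval.

Take three consecutive elements `e i`, `e j`, `e k` of `X`, with `i < j < k`. By intersecting `X`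
with `{e i, …, e k}` they form a triangle or a triad `T`. If `e i` were in a triple of the fan and
in `T` of opposite kinds, then removing it from the interval would leave an interval of connectivity
at least 3; likewise for `e k`. So `i` and `k` have the same parity, and if `k > i + 2`, some triple
of the fan of the kind opposite to `T` meets `T` only in `e j`, which contradicts orthogonality.
Hence `X` has no gaps.

If at most one element lies outside the fan, append it. The complement of a triple that closes up
the fan cyclically is an interval, so the triple is again a triangle or a triad, whose kind is
forced by orthogonality. In such a cyclic fan all circuits are determined, except for whether the
rim is a circuit or independent; the two cases are the wheel and the whirl.
-/

open Matroid Set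

universe u

variable {α : Type u}

namespace PaperDefs

/-- Deletion of a set of elements from a matroid. -/
def mdel (M : Matroid α) (D : Set α) : Matroid α := M ↾ (M.E \ D)

/-- Contraction of a set of elements in a matroid. -/
def mcon (M : Matroid α) (C : Set α) : Matroid α := (mdel M✶ C)✶

/-- A circuit: a minimal dependent set. -/
def IsCircuit (M : Matroid α) (C : Set α) : Prop :=
  M.Dep C ∧ ∀ X, X ⊂ C → M.Indep X

/-- A triangle: a 3-element circuit. -/
def IsTriangle (M : Matroid α) (T : Set α) : Prop :=
  IsCircuit M T ∧ T.encard = 3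

/-- A triad: a 3-element cocircuit. -/
def IsTriad (M : Matroid α) (T : Set α) : Prop := IsTriangle M✶ T

/-- The (extended natural number) rank of a set in a matroid: the supremum of the
cardinalities of its independent subsets. -/
noncomputable def erk (M : Matroid α) (X : Set α) : ℕ∞ :=
  ⨆ I ∈ {I : Set α | M.Indep I ∧ I ⊆ X}, I.encard

/-- Two elements are connected if they are equal or lie in a common circuit. -/
def ConnTo (M : Matroid α) (e f : α) : Prop :=
  (e = f ∧ e ∈ M.E) ∨ ∃ C, IsCircuit M C ∧ e ∈ C ∧ f ∈ C

/-- A matroid is connected if its ground set is nonempty and every two of its elements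
are connected. -/
def Conn (M : Matroid α) : Prop :=
  M.E.Nonempty ∧ ∀ e ∈ M.E, ∀ f ∈ M.E, ConnTo M e f

/-- A 2-separation of a matroid: a partition `(X, Y)` of the ground set with both sides
of size at least two and `r(X) + r(Y) - r(M) ≤ 1`. -/
def TwoSep (M : Matroid α) (X Y : Set α) : Prop :=
  X ∪ Y = M.E ∧ Disjoint X Y ∧ 2 ≤ X.encard ∧ 2 ≤ Y.encard ∧
    erk M X + erk M Y ≤ erk M M.E + 1

/-- A matroid is 3-connected if it is connected and has no 2-separation. -/
def ThreeConn (M : Matroid α) : Prop :=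
  Conn M ∧ ∀ X Y, ¬ TwoSep M X Y

/-- A matroid is 3-connected up to series and parallel sets if it is connected and, for
every 2-separation `(X, Y)`, `min {r X, r Y} = 1` or `min {r✶ X, r✶ Y} = 1`. -/
def ThreeConnUpToSP (M : Matroid α) : Prop :=
  Conn M ∧ ∀ X Y, TwoSep M X Y →
    min (erk M X) (erk M Y) = 1 ∨ min (erk M✶ X) (erk M✶ Y) = 1

/-- `N` is a minor of `M`: it is obtained from `M` by contracting a set `C` and deleting
a disjoint set `D`. -/
def IsMinor (N M : Matroid α) : Prop :=
  ∃ C D, C ⊆ M.E ∧ D ⊆ M.E ∧ Disjoint C D ∧ N = mdel (mcon M C) D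

/-- `M` is isomorphic to `N`: there is a bijection between the ground sets under which
independence corresponds. -/
def IsoTo (M N : Matroid α) : Prop :=
  ∃ f : α → α, Set.BijOn f M.E N.E ∧ ∀ I, I ⊆ M.E → (M.Indep I ↔ N.Indep (f '' I))

/-- The cyclic interval `{i, i+1, ..., j-1}` in `ZMod r`. -/
def cycArc (r : ℕ) (i j : ZMod r) : Set (ZMod r) :=
  {k | ∃ m : ℕ, m < (j - i).val ∧ k = i + (m : ZMod r)}

/-- `M` is (isomorphic to) a rank-`r` wheel for some `r ≥ 2`, i.e. the cycle matroid of
the wheel graph with `r` spokes: there is a labelling of the ground set by spokes `s i`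
and rim elements `w i` so that the circuits of `M` are precisely the rim together with
the sets consisting of two spokes and the rim elements of one of the two arcs joining
them. -/
def IsWheel (M : Matroid α) : Prop :=
  ∃ r : ℕ, 2 ≤ r ∧ ∃ s w : ZMod r → α,
    Function.Injective (Sum.elim s w) ∧
    M.E = Set.range s ∪ Set.range w ∧
    ∀ C, IsCircuit M C ↔
      (C = Set.range w ∨
        ∃ i j : ZMod r, i ≠ j ∧ C = {s i, s j} ∪ w '' cycArc r i j)

/-- `M` is (isomorphic to) a rank-`r` whirl for some `r ≥ 2`: obtained from the rank-`r`
wheel by relaxing the rim circuit; its circuits are the two-spokes-plus-arc circuits of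
the wheel together with the sets consisting of the whole rim and a single spoke. -/
def IsWhirl (M : Matroid α) : Prop :=
  ∃ r : ℕ, 2 ≤ r ∧ ∃ s w : ZMod r → α,
    Function.Injective (Sum.elim s w) ∧
    M.E = Set.range s ∪ Set.range w ∧
    ∀ C, IsCircuit M C ↔
      ((∃ i : ZMod r, C = insert (s i) (Set.range w)) ∨
        ∃ i j : ZMod r, i ≠ j ∧ C = {s i, s j} ∪ w '' cycArc r i j)

/-- A triangle if `b = true`, a triad if `b = false`. -/
def TriOrTriad (M : Matroid α) (b : Bool) (T : Set α) : Prop :=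
  cond b (IsTriangle M T) (IsTriad M T)

/-- The alternation pattern of a fan, recorded as a list: position `i` (zero-based)
carries a spoke element iff `fanBool b i = true`, where `b` records whether the first
triple of the fan is a triangle. -/
def fanBool (b : Bool) (i : ℕ) : Bool := if i % 2 = 0 then b else !b

/-- `F` is a fan of `M` whose first triple is a triangle if `b = true` (so that the
first element is a spoke element) and a triad if `b = false`: a list of at least three
distinct elements of the ground set in which every three consecutive elements form
alternately triangles and triads. -/
def IsFanWith (M : Matroid α) (b : Bool) (F : List α) : Prop :=
  3 ≤ F.length ∧ F.Nodup ∧ (∀ x ∈ F, x ∈ M.E) ∧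
  ∀ (l₁ : List α) (x y z : α) (l₂ : List α), F = l₁ ++ x :: y :: z :: l₂ →
    TriOrTriad M (fanBool b l₁.length) {x, y, z}

/-- `F` is a fan of `M`. -/
def IsFan (M : Matroid α) (F : List α) : Prop := ∃ b, IsFanWith M b F

/-- `F` is consistent with `F'`: `F` is a (not necessarily contiguous) subsequence of
`F'` or of its reversal. -/
def Consistent (F F' : List α) : Prop := F.Sublist F' ∨ F.Sublist F'.reverse

/-- A finite family of lists is pairwise disjoint. -/
def PairwiseDisjointLists (𝓕 : Finset (List α)) : Prop :=
  ∀ F ∈ 𝓕, ∀ G ∈ 𝓕, F ≠ G → ∀ x ∈ F, x ∉ G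

/-- `𝓕` is a covering family of `M'` relative to `N` and `FN`: a family of pairwise
disjoint fans of `M'`, of the same size as `FN`, such that every fan of `FN` is
consistent with a member of `𝓕` and every element of `E(M') - E(N)` lies in a member
of `𝓕`. -/
def CoveringFamily (N : Matroid α) (FN : Finset (List α)) (M' : Matroid α)
    (𝓕 : Finset (List α)) : Prop :=
  (∀ F ∈ 𝓕, IsFan M' F) ∧ PairwiseDisjointLists 𝓕 ∧ 𝓕.card = FN.card ∧
  (∀ F ∈ FN, ∃ F' ∈ 𝓕, Consistent F F') ∧
  (∀ x ∈ M'.E \ N.E, ∃ F ∈ 𝓕, x ∈ F)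

/-- `M` is obtained from `M'` by a fan-lengthening move on the fan `F₀` of `M'`,
producing the fan `F` of `M`: either `M' = M \ e₁` where `e₁` is a terminal spoke
element of `F`, or `M' = M / e₁` where `e₁` is a terminal rim element of `F`, or
(when `F` has at least five elements) `M' = M / eᵢ \ eᵢ₊₁` for a rim element `eᵢ`
of `F` with `1 ≤ i ≤ n - 1`; in each case `M` and `M'` are 3-connected and `F₀` is
the corresponding shortened fan. -/
def FanLengthen (M' M : Matroid α) (F₀ F : List α) : Prop :=
  ThreeConn M ∧ 4 ≤ F.length ∧ IsFan M' F₀ ∧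
  ∃ b, IsFanWith M b F ∧
    ((∃ e F', F = e :: F' ∧ b = true ∧ M' = mdel M {e} ∧ ThreeConn M' ∧ F₀ = F') ∨
     (∃ e F', F = e :: F' ∧ b = false ∧ M' = mcon M {e} ∧ ThreeConn M' ∧ F₀ = F') ∨
     (5 ≤ F.length ∧ ∃ (l₁ : List α) (x y : α) (l₂ : List α),
        F = l₁ ++ x :: y :: l₂ ∧ fanBool b l₁.length = false ∧
        M' = mdel (mcon M {x}) {y} ∧ ThreeConn M' ∧ F₀ = l₁ ++ l₂))

/-- The fan-extensions of `N` relative to the family `FN` of fans of `N`: the smallest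
collection of matroids containing `N` and closed under fan-lengthening moves performed
on fans belonging to covering families. -/
inductive FanExt (N : Matroid α) (FN : Finset (List α)) : Matroid α → Prop
  | base : FanExt N FN N
  | step (M' M : Matroid α) (𝓕 : Finset (List α)) (F₀ F : List α) :
      FanExt N FN M' → CoveringFamily N FN M' 𝓕 → F₀ ∈ 𝓕 →
      FanLengthen M' M F₀ F → FanExt N FN M

/-- The covering family `𝓕` of `M` admits a fan-shortening move: there are a matroid
`M'` having `N` as a minor and a fan `F₀` of `M'` such that `M` is obtained from `M'`
by a fan-lengthening move on `F₀` producing a fan that belongs to `𝓕`. -/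
def AdmitsFanShortening (N M : Matroid α) (𝓕 : Finset (List α)) : Prop :=
  ∃ (M' : Matroid α) (F₀ F : List α), IsMinor N M' ∧ F ∈ 𝓕 ∧ FanLengthen M' M F₀ F

/-- The alternation pattern of a fan presented as a function with one-based indices:
position `i` carries a spoke element iff `posBool b i = true`, where `b` records
whether the first triple of the fan is a triangle. -/
def posBool (b : Bool) (i : ℕ) : Bool := if i % 2 = 1 then b else !b

/-- `(e 1, ..., e n)` is a fan of `M` whose first triple is a triangle if `b = true`
(so that `e 1` is a spoke element) and a triad if `b = false`: at least three distinct
elements of the ground set in which every three consecutive elements form alternately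
triangles and triads. -/
def IsFanFun (M : Matroid α) (b : Bool) (n : ℕ) (e : ℕ → α) : Prop :=
  3 ≤ n ∧ (∀ i j, 1 ≤ i → i ≤ n → 1 ≤ j → j ≤ n → e i = e j → i = j) ∧
  (∀ i, 1 ≤ i → i ≤ n → e i ∈ M.E) ∧
  ∀ i, 1 ≤ i → i + 2 ≤ n → TriOrTriad M (posBool b i) {e i, e (i+1), e (i+2)}

/-- The set of elements of the fan `(e 1, ..., e n)`. -/
def fanSet (n : ℕ) (e : ℕ → α) : Set α := {a | ∃ i, 1 ≤ i ∧ i ≤ n ∧ a = e i}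

/-- The set of rim elements of the fan `(e 1, ..., e n)` with alternation pattern `b`. -/
def rimSet (b : Bool) (n : ℕ) (e : ℕ → α) : Set α :=
  {a | ∃ i, 1 ≤ i ∧ i ≤ n ∧ posBool b i = false ∧ a = e i}

/-- `M` is representable over the field `𝔽`. -/
def RepOver (M : Matroid α) (𝔽 : Type*) [Field 𝔽] : Prop :=
  ∃ f : α → (α → 𝔽),
    ∀ I : Set α, I ⊆ M.E → (M.Indep I ↔ LinearIndependent 𝔽 (fun x : I => f (x : α)))

/-- `M` has a minor isomorphic to a member of `𝓢`. -/
def HasSMinor (𝓢 : Set (Matroid α)) (M : Matroid α) : Prop :=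
  ∃ S ∈ 𝓢, ∃ N, IsMinor N M ∧ IsoTo N S

/-- `M` is `𝓢`-fragile: for every element `e` of `M`, at least one of `M \ e` and
`M / e` has no `𝓢`-minor. -/
def SFragile (𝓢 : Set (Matroid α)) (M : Matroid α) : Prop :=
  ∀ e ∈ M.E, ¬ HasSMinor 𝓢 (mdel M {e}) ∨ ¬ HasSMinor 𝓢 (mcon M {e})

end PaperDefs

open PaperDefs

namespace PaperDefs

variable {M : Matroid α} {A B C T : Set α} {x : α} {t : Bool}

/-! ### Rank and connectivity -/

lemma erk_eq_eRk (M : Matroid α) (X : Set α) : erk M X = M.eRk X := by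
  refine le_antisymm (iSup₂_le fun I hI => hI.1.encard_le_eRk_of_subset hI.2) ?_
  obtain ⟨I, hIX, hI, hcard⟩ := Matroid.le_eRk_iff.1 (le_refl (M.eRk X))
  exact hcard ▸ le_iSup₂_of_le I ⟨hI, hIX⟩ le_rfl

lemma isCircuit_iff : IsCircuit M C ↔ M.IsCircuit C :=
  Matroid.isCircuit_iff_forall_ssubset.symm

/-- The rank of `X` as an integer, so that it can be subtracted. It is only meaningful for
matroids of finite rank: an infinite rank is sent to `0`. -/
noncomputable def intRk (M : Matroid α) (X : Set α) : ℤ := (M.eRk X).toNat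

/-- The connectivity function `λ_M(A) = r(A) + r(E - A) - r(M)`. -/
noncomputable def connectivity (M : Matroid α) (A : Set α) : ℤ :=
  intRk M A + intRk M (M.E \ A) - intRk M M.E

lemma connectivity_compl (hA : A ⊆ M.E) : connectivity M (M.E \ A) = connectivity M A := by
  simp only [connectivity, sdiff_sdiff_cancel_left hA]
  ring

section RankFinite

variable [M.RankFinite]

lemma coe_toNat_eRk (M : Matroid α) [M.RankFinite] (X : Set α) :
    ((M.eRk X).toNat : ℕ∞) = M.eRk X :=
  ENat.natCast_toNat (Matroid.eRk_ne_top_iff.2 (M.isRkFinite_set X))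

lemma intRk_le_intRk_iff : intRk M A ≤ intRk M B ↔ M.eRk A ≤ M.eRk B := by
  rw [← coe_toNat_eRk M A, ← coe_toNat_eRk M B]
  simp [intRk]

lemma intRk_le_natCast_iff {k : ℕ} : intRk M A ≤ k ↔ M.eRk A ≤ k := by
  rw [← coe_toNat_eRk M A]
  simp [intRk]

lemma natCast_le_intRk_iff {k : ℕ} : k ≤ intRk M A ↔ k ≤ M.eRk A := by
  rw [← coe_toNat_eRk M A]
  simp [intRk]

lemma intRk_mono (h : A ⊆ B) : intRk M A ≤ intRk M B :=
  intRk_le_intRk_iff.2 (M.eRk_mono h)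

lemma intRk_le_of_encard_le {k : ℕ} (h : A.encard ≤ k) : intRk M A ≤ k :=
  intRk_le_natCast_iff.2 ((M.eRk_le_encard A).trans h)

lemma intRk_insert_le (M : Matroid α) [M.RankFinite] (x : α) (A : Set α) :
    intRk M (insert x A) ≤ intRk M A + 1 := by
  have h := M.eRk_insert_le_add_one x A
  rw [← coe_toNat_eRk M A, ← coe_toNat_eRk M (insert x A)] at h
  simp only [intRk]
  exact_mod_cast h

lemma intRk_inter_add_intRk_union_le (M : Matroid α) [M.RankFinite] (A B : Set α) :
    intRk M (A ∩ B) + intRk M (A ∪ B) ≤ intRk M A + intRk M B := by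
  have h := M.eRk_inter_add_eRk_union_le A B
  rw [← coe_toNat_eRk M A, ← coe_toNat_eRk M B, ← coe_toNat_eRk M (A ∩ B),
    ← coe_toNat_eRk M (A ∪ B)] at h
  simp only [intRk]
  exact_mod_cast h

lemma natCast_le_intRk_iff_indep {k : ℕ} (hA : A.encard = k) : k ≤ intRk M A ↔ M.Indep A := by
  rw [natCast_le_intRk_iff, Matroid.indep_iff_eRk_eq_encard, hA,
    (hA ▸ M.eRk_le_encard A : M.eRk A ≤ k).ge_iff_eq]

lemma intRk_ground_le_iff_coindep (hA : A ⊆ M.E) :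
    intRk M M.E ≤ intRk M (M.E \ A) ↔ M.Coindep A := by
  rw [intRk_le_intRk_iff, Matroid.coindep_iff_compl_spanning hA,
    Matroid.spanning_iff_eRk_le sdiff_subset, Matroid.eRank_def]

lemma connectivity_inter_add_connectivity_union_le (M : Matroid α) [M.RankFinite]
    (A B : Set α) :
    connectivity M (A ∩ B) + connectivity M (A ∪ B) ≤ connectivity M A + connectivity M B := by
  have h := intRk_inter_add_intRk_union_le M A B
  have h_compl := intRk_inter_add_intRk_union_le M (M.E \ A) (M.E \ B)
  rw [← sdiff_inter, sdiff_inter_sdiff] at h_compl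
  simp only [connectivity]
  linarith

lemma connectivity_le_of_encard_le {k : ℕ} (h : A.encard ≤ k) : connectivity M A ≤ k := by
  have hA := intRk_le_of_encard_le (M := M) h
  have hcompl := intRk_mono (M := M) (sdiff_subset : M.E \ A ⊆ M.E)
  simp only [connectivity]
  linarith

lemma connectivity_le_of_encard_compl_le {k : ℕ} (hA : A ⊆ M.E) (h : (M.E \ A).encard ≤ k) :
    connectivity M A ≤ k :=
  connectivity_compl hA ▸ connectivity_le_of_encard_le h

lemma natCast_le_connectivity_iff {k : ℕ} (hA : A ⊆ M.E) (hcard : A.encard = k) :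
    k ≤ connectivity M A ↔ M.Indep A ∧ M.Coindep A := by
  have hrk := intRk_le_of_encard_le (M := M) hcard.le
  have hcompl := intRk_mono (M := M) (sdiff_subset : M.E \ A ⊆ M.E)
  rw [← natCast_le_intRk_iff_indep hcard, ← intRk_ground_le_iff_coindep hA]
  simp only [connectivity]
  omega

lemma connectivity_le_iff {k : ℕ} :
    connectivity M A ≤ k ↔ erk M A + erk M (M.E \ A) ≤ erk M M.E + k := by
  rw [erk_eq_eRk, erk_eq_eRk, erk_eq_eRk, ← coe_toNat_eRk M A, ← coe_toNat_eRk M (M.E \ A),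
    ← coe_toNat_eRk M M.E]
  simp only [connectivity, intRk, sub_le_iff_le_add']
  norm_cast

/-- The cocircuit `K` witnesses that `x` lies in the coclosure of `A`. -/
lemma connectivity_insert_add_one_le {K : Set α} (hxA : x ∉ A) (hcl : x ∈ M.closure A)
    (hK : M.IsCocircuit K) (hxK : x ∈ K) (hKA : K ⊆ insert x A) :
    connectivity M (insert x A) + 1 ≤ connectivity M A := by
  have hxE : x ∈ M.E := hK.subset_ground hxK
  have h_insert : intRk M (insert x A) ≤ intRk M A := by
    rw [intRk_le_intRk_iff, ← M.eRk_closure_eq (insert x A),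
      Matroid.closure_insert_eq_of_mem_closure hcl, M.eRk_closure_eq]
  have hx_notMem : x ∉ M.closure (M.E \ insert x A) := by
    intro hx
    obtain ⟨C, hC, hCircuit, hxC⟩ :=
      Matroid.exists_isCircuit_of_mem_closure hx (fun h => h.2 (mem_insert x A))
    refine hCircuit.inter_isCocircuit_ne_singleton hK (e := x) ?_
    ext y
    constructor
    · rintro ⟨hyC, hyK⟩
      exact (hC hyC).resolve_right fun h => h.2 (hKA hyK)
    · rintro rfl
      exact ⟨hxC, hxK⟩
  have h_compl : intRk M (M.E \ insert x A) + 1 ≤ intRk M (M.E \ A) := by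
    have heq : M.E \ A = insert x (M.E \ insert x A) := by
      ext y
      by_cases hy : y = x <;> simp_all
    have h := Matroid.eRk_insert_eq_add_one ⟨hxE, hx_notMem⟩
    rw [← heq, ← coe_toNat_eRk M (M.E \ A), ← coe_toNat_eRk M (M.E \ insert x A)] at h
    simp only [intRk]
    exact_mod_cast h.ge
  simp only [connectivity]
  linarith

end RankFinite

/-! ### 3-connected matroids -/

lemma two_le_encard_iff_nontrivial : 2 ≤ A.encard ↔ A.Nontrivial := by
  rw [← one_lt_encard_iff_nontrivial, ← Order.add_one_le_iff_of_not_isMax (by simp)]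
  rfl

lemma nontrivial_sdiff_of_encard_le_two (hB : 4 ≤ B.encard) (hA : A.encard ≤ 2) :
    (B \ A).Nontrivial := by
  rw [← two_le_encard_iff_nontrivial, ← ENat.add_le_add_iff_right (k := 2) (by simp)]
  calc (2 : ℕ∞) + 2 ≤ B.encard := le_trans (by norm_num) hB
    _ ≤ (B \ A).encard + A.encard := encard_le_encard_sdiff_add_encard B A
    _ ≤ (B \ A).encard + 2 := by gcongr

namespace ThreeConn

/-- With the `ℕ∞`-valued rank, every partition of a matroid of infinite rank satisfies the
inequality in `TwoSep`. -/
lemma rankFinite (hM : ThreeConn M) (hE : 4 ≤ M.E.encard) : M.RankFinite := by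
  rw [← Matroid.eRank_ne_top_iff, Matroid.eRank_def]
  intro htop
  obtain ⟨A, hA, hA2⟩ :=
    exists_subset_encard_eq (k := 2) (s := M.E) (le_trans (by norm_num) hE)
  refine hM.2 A (M.E \ A) ⟨union_sdiff_cancel hA, disjoint_sdiff_right, hA2.ge, ?_, ?_⟩
  · exact two_le_encard_iff_nontrivial.2 (nontrivial_sdiff_of_encard_le_two hE hA2.le)
  · simp [erk_eq_eRk, htop]

lemma two_le_connectivity [M.RankFinite] (hM : ThreeConn M) (hA : A ⊆ M.E) (hA₂ : A.Nontrivial)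
    (hcompl : (M.E \ A).Nontrivial) : 2 ≤ connectivity M A := by
  by_contra! hlt
  exact hM.2 A (M.E \ A) ⟨union_sdiff_cancel hA, disjoint_sdiff_right,
    two_le_encard_iff_nontrivial.2 hA₂, two_le_encard_iff_nontrivial.2 hcompl,
    connectivity_le_iff.1 (by push_cast; omega : connectivity M A ≤ (1 : ℕ))⟩

lemma connectivity_union_le [M.RankFinite] (hM : ThreeConn M) (hAE : A ⊆ M.E)
    (hA : connectivity M A ≤ 2) (hB : connectivity M B ≤ 2) (hinter : (A ∩ B).Nontrivial)
    (hcompl : (M.E \ (A ∩ B)).Nontrivial) : connectivity M (A ∪ B) ≤ 2 := by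
  have h := hM.two_le_connectivity (inter_subset_left.trans hAE) hinter hcompl
  have := connectivity_inter_add_connectivity_union_le M A B
  linarith

lemma connectivity_inter_le [M.RankFinite] (hM : ThreeConn M) (hAE : A ⊆ M.E) (hBE : B ⊆ M.E)
    (hA : connectivity M A ≤ 2) (hB : connectivity M B ≤ 2) (hunion : (A ∪ B).Nontrivial)
    (hcompl : (M.E \ (A ∪ B)).Nontrivial) : connectivity M (A ∩ B) ≤ 2 := by
  have h := hM.two_le_connectivity (union_subset hAE hBE) hunion hcompl
  have := connectivity_inter_add_connectivity_union_le M A B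
  linarith

lemma indep_and_coindep_of_encard_eq_two [M.RankFinite] (hM : ThreeConn M)
    (hE : 4 ≤ M.E.encard) (hA : A ⊆ M.E) (hcard : A.encard = 2) : M.Indep A ∧ M.Coindep A :=
  (natCast_le_connectivity_iff hA hcard).1 (hM.two_le_connectivity hA
    (two_le_encard_iff_nontrivial.1 hcard.ge) (nontrivial_sdiff_of_encard_le_two hE hcard.le))

end ThreeConn

/-! ### Triangles and triads -/

lemma isTriangle_of_dep (hcard : T.encard = 3) (hdep : M.Dep T)
    (hpairs : ∀ A ⊆ T, A.encard = 2 → M.Indep A) : IsTriangle M T := by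
  refine ⟨isCircuit_iff.2 ?_, hcard⟩
  refine Matroid.isCircuit_iff_dep_forall_sdiff_singleton_indep.2
    ⟨hdep, fun x hx => hpairs _ sdiff_subset ?_⟩
  rw [encard_sdiff_singleton_of_mem hx, hcard]
  rfl

namespace TriOrTriad

lemma subset_ground (h : TriOrTriad M t T) : T ⊆ M.E := by
  cases t <;> exact (isCircuit_iff.1 h.1).subset_ground

lemma encard_eq (h : TriOrTriad M t T) : T.encard = 3 := by
  cases t <;> exact h.2

lemma connectivity_le [M.RankFinite] (h : TriOrTriad M t T) : connectivity M T ≤ 2 := by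
  by_contra! hlt
  obtain ⟨hindep, hcoindep⟩ :=
    (natCast_le_connectivity_iff h.subset_ground h.encard_eq).1 (by push_cast; omega)
  cases t
  · exact (isCircuit_iff.1 h.1).dep.not_indep hcoindep
  · exact (isCircuit_iff.1 h.1).dep.not_indep hindep

lemma eq_of_inter_eq_singleton {t₁ t₂ : Bool} {T₁ T₂ : Set α} (h₁ : TriOrTriad M t₁ T₁)
    (h₂ : TriOrTriad M t₂ T₂) (h : T₁ ∩ T₂ = {x}) : t₁ = t₂ := by
  cases t₁ <;> cases t₂
  · rfl
  · exact absurd (inter_comm T₂ T₁ ▸ h)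
      ((isCircuit_iff.1 h₂.1).inter_isCocircuit_ne_singleton (isCircuit_iff.1 h₁.1))
  · exact absurd h
      ((isCircuit_iff.1 h₁.1).inter_isCocircuit_ne_singleton (isCircuit_iff.1 h₂.1))
  · rfl

lemma connectivity_insert_add_one_le [M.RankFinite] {T₁ T₂ : Set α} (h₁ : TriOrTriad M t T₁)
    (h₂ : TriOrTriad M (!t) T₂) (hx₁ : x ∈ T₁) (hx₂ : x ∈ T₂) (hT₁ : T₁ ⊆ insert x A)
    (hT₂ : T₂ ⊆ insert x A) (hxA : x ∉ A) :
    connectivity M (insert x A) + 1 ≤ connectivity M A := by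
  wlog ht : t = true generalizing t T₁ T₂
  · obtain rfl : t = false := by simpa using ht
    exact this h₂ h₁ hx₂ hx₁ hT₂ hT₁ rfl
  subst ht
  refine PaperDefs.connectivity_insert_add_one_le hxA ?_ (isCircuit_iff.1 h₂.1) hx₂ hT₂
  refine M.closure_subset_closure ?_
    ((isCircuit_iff.1 h₁.1).mem_closure_sdiff_singleton_of_mem hx₁)
  exact fun y hy => (hT₁ hy.1).resolve_left hy.2

end TriOrTriad

namespace ThreeConn

lemma exists_triOrTriad [M.RankFinite] (hM : ThreeConn M) (hE : 4 ≤ M.E.encard) (hT : T ⊆ M.E)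
    (hcard : T.encard = 3) (hconn : connectivity M T ≤ 2) : ∃ t, TriOrTriad M t T := by
  have hpairs : ∀ A ⊆ T, A.encard = 2 → M.Indep A ∧ M.Coindep A :=
    fun A hA => hM.indep_and_coindep_of_encard_eq_two hE (hA.trans hT)
  have hnot : ¬ (M.Indep T ∧ M.Coindep T) := by
    rw [← natCast_le_connectivity_iff hT hcard]
    push_cast
    omega
  by_cases hindep : M.Indep T
  · refine ⟨false, isTriangle_of_dep hcard ?_ fun A hA h => (hpairs A hA h).2⟩
    exact ⟨fun h => hnot ⟨hindep, h⟩, hT⟩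
  · exact ⟨true, isTriangle_of_dep hcard ⟨hindep, hT⟩ fun A hA h => (hpairs A hA h).1⟩

lemma triOrTriad_of_connectivity_le_one [M.RankFinite] (hM : ThreeConn M) (hE : 4 ≤ M.E.encard)
    (hT : T ⊆ M.E) (hcard : T.encard = 3) (hconn : connectivity M T ≤ 1) (t : Bool) :
    TriOrTriad M t T := by
  have hpairs : ∀ A ⊆ T, A.encard = 2 → M.Indep A ∧ M.Coindep A :=
    fun A hA => hM.indep_and_coindep_of_encard_eq_two hE (hA.trans hT)
  obtain ⟨x, hx⟩ : T.Nonempty := encard_ne_zero.1 (by simp [hcard])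
  have hcard' : (T \ {x}).encard = (2 : ℕ) := by
    rw [encard_sdiff_singleton_of_mem hx, hcard]
    rfl
  obtain ⟨hindep, hcoindep⟩ := hpairs _ sdiff_subset hcard'
  cases t
  · refine isTriangle_of_dep hcard ⟨fun h => ?_, hT⟩ fun A hA h => (hpairs A hA h).2
    have h_compl := (intRk_ground_le_iff_coindep hT).2 h
    have h_rk := (natCast_le_intRk_iff_indep hcard').2 hindep
    have h_mono := intRk_mono (M := M) (sdiff_subset : T \ {x} ⊆ T)
    simp only [connectivity] at hconn
    push_cast at h_rk
    linarith
  · refine isTriangle_of_dep hcard ⟨fun h => ?_, hT⟩ fun A hA h => (hpairs A hA h).1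
    have h_rk := (natCast_le_intRk_iff_indep (k := 3) hcard).2 h
    have h_compl := (intRk_ground_le_iff_coindep (sdiff_subset.trans hT)).2 hcoindep
    have h_insert := intRk_insert_le M x (M.E \ T)
    rw [show insert x (M.E \ T) = M.E \ (T \ {x}) by
      ext y
      by_cases hy : y = x <;> simp_all [hT hx]] at h_insert
    simp only [connectivity] at hconn
    push_cast at h_rk
    linarith

end ThreeConn

/-! ### Fans -/

variable {b : Bool} {n : ℕ} {e : ℕ → α}

lemma posBool_eq_posBool_iff {p q : ℕ} : posBool b p = posBool b q ↔ p % 2 = q % 2 := by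
  cases b <;> grind [posBool]

lemma posBool_posBool_reverse {k : ℕ} (hk : k ≤ n + 1) :
    posBool (posBool b n) (n + 1 - k) = posBool b k := by
  cases b <;> grind [posBool]

lemma fanSet_eq_image (n : ℕ) (e : ℕ → α) : fanSet n e = e '' Icc 1 n := by
  ext a
  exact ⟨fun ⟨i, h₁, h₂, h⟩ => ⟨i, ⟨h₁, h₂⟩, h.symm⟩, fun ⟨i, ⟨h₁, h₂⟩, h⟩ => ⟨i, h₁, h₂, h.symm⟩⟩

lemma image_Icc_reverse (e : ℕ → α) {i k : ℕ} (hk : k ≤ n) :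
    (fun j => e (n + 1 - j)) '' Icc (n + 1 - k) (n + 1 - i) = e '' Icc i k := by
  ext a
  constructor
  · rintro ⟨j, hj, rfl⟩
    simp only [mem_Icc] at hj
    exact ⟨n + 1 - j, by simp only [mem_Icc]; omega, rfl⟩
  · rintro ⟨j, hj, rfl⟩
    simp only [mem_Icc] at hj
    exact ⟨n + 1 - j, by simp only [mem_Icc]; omega, congrArg e (by omega)⟩

lemma image_Icc_one_reverse (e : ℕ → α) (n : ℕ) :
    (fun j => e (n + 1 - j)) '' Icc 1 n = e '' Icc 1 n := by
  simpa using image_Icc_reverse e (i := 1) (le_refl n)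

lemma image_update_Icc (e : ℕ → α) (n : ℕ) (z : α) :
    Function.update e (n + 1) z '' Icc 1 (n + 1) = insert z (e '' Icc 1 n) := by
  rw [show Icc 1 (n + 1) = insert (n + 1) (Icc 1 n) by
    ext; simp only [mem_Icc, mem_insert_iff]; omega, image_insert_eq, Function.update_self]
  congr 1
  exact image_congr fun i hi => Function.update_of_ne (by grind) _ _

namespace IsFanFun

variable {S : Set ℕ} {i j k : ℕ}

lemma injOn (hf : IsFanFun M b n e) : InjOn e (Icc 1 n) :=
  fun i hi j hj h => hf.2.1 i j hi.1 hi.2 hj.1 hj.2 h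

lemma mem_ground (hf : IsFanFun M b n e) (hi : i ∈ Icc 1 n) : e i ∈ M.E :=
  hf.2.2.1 i hi.1 hi.2

lemma image_subset_ground (hf : IsFanFun M b n e) (hS : S ⊆ Icc 1 n) : e '' S ⊆ M.E :=
  image_subset_iff.2 fun _ hi => hf.mem_ground (hS hi)

lemma encard_image (hf : IsFanFun M b n e) (hS : S ⊆ Icc 1 n) : (e '' S).encard = S.encard :=
  (hf.injOn.mono hS).encard_image

lemma nontrivial_image_Icc (hf : IsFanFun M b n e) (hi : 1 ≤ i) (hik : i < k) (hk : k ≤ n) :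
    (e '' Icc i k).Nontrivial :=
  (nontrivial_of_mem_mem_ne (left_mem_Icc.2 hik.le) (right_mem_Icc.2 hik.le)
    hik.ne).image_of_injOn (hf.injOn.mono (Icc_subset_Icc hi hk))

lemma triOrTriad_Icc (hf : IsFanFun M b n e) (hi : 1 ≤ i) (hin : i + 2 ≤ n) :
    TriOrTriad M (posBool b i) (e '' Icc i (i + 2)) := by
  have h : Icc i (i + 2) = {i, i + 1, i + 2} := by
    ext; simp only [mem_Icc, mem_insert_iff, mem_singleton_iff]; omega
  rw [h, image_insert_eq, image_pair]
  exact hf.2.2.2 i hi hin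

lemma reverse (hf : IsFanFun M b n e) :
    IsFanFun M (posBool b n) n (fun i => e (n + 1 - i)) := by
  refine ⟨hf.1, fun i j hi hi' hj hj' h => ?_, fun i hi hi' => ?_, fun i hi hi' => ?_⟩
  · have := hf.injOn (by simp only [mem_Icc]; omega) (by simp only [mem_Icc]; omega) h
    omega
  · exact hf.mem_ground (by simp only [mem_Icc]; omega)
  · have h := hf.triOrTriad_Icc (i := n + 1 - (i + 2)) (by omega) (by omega)
    have hkind : posBool b (n + 1 - (i + 2)) = posBool (posBool b n) i := by
      cases b <;> grind [posBool]
    have hIcc : Icc (n + 1 - (i + 2)) (n + 1 - (i + 2) + 2) =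
        {n + 1 - i, n + 1 - (i + 1), n + 1 - (i + 2)} := by
      ext; simp only [mem_Icc, mem_insert_iff, mem_singleton_iff]; omega
    rwa [hkind, hIcc, image_insert_eq, image_pair] at h

lemma connectivity_Icc_le [M.RankFinite] (hf : IsFanFun M b n e) (hM : ThreeConn M)
    (hE : 4 ≤ M.E.encard) (hi : 1 ≤ i) (hk : k ≤ n) : connectivity M (e '' Icc i k) ≤ 2 := by
  obtain hlt | hle := lt_or_ge k (i + 2)
  · refine connectivity_le_of_encard_le (k := 2) ((encard_image_le e _).trans ?_)
    rw [← Finset.coe_Icc, encard_coe_eq_coe_finsetCard, Nat.card_Icc]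
    exact_mod_cast (by omega : k + 1 - i ≤ 2)
  induction k, hle using Nat.le_induction with
  | base => exact (hf.triOrTriad_Icc hi hk).connectivity_le
  | succ k hik ih =>
    obtain ⟨j, rfl⟩ : ∃ j, k = j + 1 := ⟨k - 1, by omega⟩
    have hunion : Icc i (j + 2) = Icc i (j + 1) ∪ Icc j (j + 2) := by
      ext; simp only [mem_Icc, mem_union]; omega
    have hinter : Icc i (j + 1) ∩ Icc j (j + 2) = {j, j + 1} := by
      ext; simp only [mem_Icc, mem_inter_iff, mem_insert_iff, mem_singleton_iff]; omega
    have hsub : ({j, j + 1} : Set ℕ) ⊆ Icc 1 n := by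
      rintro _ (rfl | rfl) <;> simp only [mem_Icc] <;> omega
    have hinter_image : e '' Icc i (j + 1) ∩ e '' Icc j (j + 2) = e '' {j, j + 1} := by
      rw [← hinter]
      exact (hf.injOn.image_inter (Icc_subset_Icc hi (by omega))
        (Icc_subset_Icc (by omega) hk)).symm
    rw [show j + 1 + 1 = j + 2 from rfl, hunion, image_union]
    refine hM.connectivity_union_le (hf.image_subset_ground (Icc_subset_Icc hi (by omega)))
      (ih (by omega)) (hf.triOrTriad_Icc (by omega) hk).connectivity_le ?_ ?_
    · rw [hinter_image]
      exact (nontrivial_pair (by omega)).image_of_injOn (hf.injOn.mono hsub)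
    · rw [hinter_image]
      exact nontrivial_sdiff_of_encard_le_two hE
        ((encard_image_le e _).trans (encard_pair (by omega)).le)

/-! ### 3-separating subsets of a fan -/

/-- Otherwise `e i` lies in a triangle and a triad contained in the interval, so that removing
it yields an interval of connectivity at least 3. -/
lemma posBool_eq_of_left_mem [M.RankFinite] (hf : IsFanFun M b n e) (hM : ThreeConn M)
    (hE : 4 ≤ M.E.encard) (hi : 1 ≤ i) (hik : i + 2 ≤ k) (hk : k ≤ n)
    (hcompl : (M.E \ e '' Icc i k).Nontrivial) (hT : TriOrTriad M t T)
    (hTsub : T ⊆ e '' Icc i k) (hiT : e i ∈ T) : posBool b i = t := by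
  by_contra hne
  have hsub : Icc i k ⊆ Icc 1 n := Icc_subset_Icc hi hk
  have hinsert : insert (e i) (e '' Icc (i + 1) k) = e '' Icc i k := by
    rw [← image_insert_eq]
    congr 1
    ext; simp only [mem_insert_iff, mem_Icc]; omega
  have htriple : TriOrTriad M (!t) (e '' Icc i (i + 2)) :=
    Bool.eq_not_of_ne hne ▸ hf.triOrTriad_Icc hi (hik.trans hk)
  have hnotMem : e i ∉ e '' Icc (i + 1) k := by
    rw [(hf.injOn.mono hsub).mem_image_iff (Icc_subset_Icc (by omega) le_rfl)
      (left_mem_Icc.2 (by omega))]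
    simp
  have hdrop := hT.connectivity_insert_add_one_le htriple hiT
    (mem_image_of_mem e (left_mem_Icc.2 (by omega))) (hinsert ▸ hTsub)
    (hinsert ▸ image_mono (Icc_subset_Icc le_rfl hik)) hnotMem
  have hge := hM.two_le_connectivity (hf.image_subset_ground hsub)
    (hf.nontrivial_image_Icc hi (by omega) hk) hcompl
  have hle := hf.connectivity_Icc_le hM hE (i := i + 1) (by omega) hk
  rw [hinsert] at hdrop
  linarith

lemma posBool_eq_of_right_mem [M.RankFinite] (hf : IsFanFun M b n e) (hM : ThreeConn M)
    (hE : 4 ≤ M.E.encard) (hi : 1 ≤ i) (hik : i + 2 ≤ k) (hk : k ≤ n)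
    (hcompl : (M.E \ e '' Icc i k).Nontrivial) (hT : TriOrTriad M t T)
    (hTsub : T ⊆ e '' Icc i k) (hkT : e k ∈ T) : posBool b k = t := by
  rw [← posBool_posBool_reverse (n := n) (by omega : k ≤ n + 1)]
  rw [← image_Icc_reverse e hk] at hcompl hTsub
  refine hf.reverse.posBool_eq_of_left_mem hM hE (by omega) (by omega) (by omega) hcompl hT
    hTsub ?_
  rwa [show n + 1 - (n + 1 - k) = k by omega]

lemma eq_add_two_of_triOrTriad [M.RankFinite] (hf : IsFanFun M b n e) (hM : ThreeConn M)
    (hE : 4 ≤ M.E.encard) (hi : 1 ≤ i) (hij : i < j) (hjk : j < k) (hk : k ≤ n)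
    (hcompl : (M.E \ e '' Icc i k).Nontrivial) (hT : TriOrTriad M t (e '' {i, j, k})) :
    k = i + 2 := by
  by_contra hne
  have hsub : ({i, j, k} : Set ℕ) ⊆ Icc i k := by
    rintro _ (rfl | rfl | rfl) <;> simp only [mem_Icc] <;> omega
  have hsub_fan : ({i, j, k} : Set ℕ) ⊆ Icc 1 n := hsub.trans (Icc_subset_Icc hi hk)
  have hleft : posBool b i = t :=
    hf.posBool_eq_of_left_mem hM hE hi (by omega) hk hcompl hT (image_mono hsub)
      (mem_image_of_mem e (by simp))
  have hright : posBool b k = t :=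
    hf.posBool_eq_of_right_mem hM hE hi (by omega) hk hcompl hT (image_mono hsub)
      (mem_image_of_mem e (by simp))
  have hinner : ∀ p, i < p → p ≤ j → j ≤ p + 2 → p + 2 < k → p % 2 = i % 2 := by
    intro p hip hpj hjp hpk
    have hinter : Icc p (p + 2) ∩ {i, j, k} = {j} := by
      ext; simp only [mem_Icc, mem_inter_iff, mem_insert_iff, mem_singleton_iff]; omega
    refine posBool_eq_posBool_iff.1 (Eq.trans ?_ hleft.symm)
    refine (hf.triOrTriad_Icc (by omega) (by omega)).eq_of_inter_eq_singleton (x := e j) hT ?_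
    rw [← hf.injOn.image_inter (Icc_subset_Icc (by omega) (by omega)) hsub_fan, hinter,
      image_singleton]
  have hparity := posBool_eq_posBool_iff.1 (hleft.trans hright.symm)
  have h₀ := hinner j
  have h₁ := hinner (j - 1)
  have h₂ := hinner (j - 2)
  omega

end IsFanFun

lemma exists_eq_Icc_of_consecutive {P : Finset ℕ} (hcard : 3 ≤ P.card)
    (hP : ∀ i j k, i < j → j < k → ↑P ∩ Icc i k = ({i, j, k} : Set ℕ) → k = i + 2) :
    ∃ x y, x < y ∧ P = Finset.Icc x y := by
  induction P using Finset.induction_on_max with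
  | empty => simp at hcard
  | insert z Q hmax ih =>
    have hz : z ∉ Q := fun h => (hmax z h).false
    rw [Finset.card_insert_of_notMem hz] at hcard
    obtain hcard₂ | hcard₃ : Q.card = 2 ∨ 3 ≤ Q.card := by omega
    · obtain ⟨i, j, hij, rfl⟩ : ∃ i j, i < j ∧ Q = {i, j} := by
        obtain ⟨i, j, hne, rfl⟩ := Finset.card_eq_two.1 hcard₂
        obtain h | h := hne.lt_or_gt
        · exact ⟨i, j, h, rfl⟩
        · exact ⟨j, i, h, Finset.pair_comm i j⟩
      have hjz : j < z := hmax j (by simp)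
      have := hP i j z hij hjz (by
        ext; simp only [Finset.coe_insert, Finset.coe_singleton, mem_inter_iff, mem_insert_iff,
          mem_singleton_iff, mem_Icc]; omega)
      refine ⟨i, z, by omega, ?_⟩
      ext; simp only [Finset.mem_insert, Finset.mem_singleton, Finset.mem_Icc]; omega
    · obtain ⟨x, y, hxy, rfl⟩ := ih hcard₃ fun i j k hij hjk h => by
        have hk : k ∈ (↑Q ∩ Icc i k : Set ℕ) := h ▸ by simp
        refine hP i j k hij hjk (h ▸ ?_)
        rw [Finset.coe_insert, insert_inter_of_notMem]
        exact fun hz => (hmax k hk.1).not_ge hz.2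
      have hyz : y < z := hmax y (Finset.right_mem_Icc.2 hxy.le)
      have := hP (y - 1) y z (by omega) hyz (by
        ext; simp only [Finset.coe_insert, Finset.coe_Icc, mem_inter_iff, mem_insert_iff,
          mem_singleton_iff, mem_Icc]; omega)
      refine ⟨x, z, by omega, ?_⟩
      ext; simp only [Finset.mem_insert, Finset.mem_Icc]; omega

namespace IsFanFun

lemma exists_eq_Icc_of_connectivity_le [M.RankFinite] (hf : IsFanFun M b n e) (hM : ThreeConn M)
    (hE : 4 ≤ M.E.encard) (hcompl : (M.E \ e '' Icc 1 n).Nontrivial) {P : Finset ℕ}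
    (hPn : ↑P ⊆ Icc 1 n) (hcard : 3 ≤ P.card) (hconn : connectivity M (e '' P) ≤ 2) :
    ∃ x y, x < y ∧ P = Finset.Icc x y := by
  refine exists_eq_Icc_of_consecutive hcard fun i j k hij hjk hPik => ?_
  have hsub : ({i, j, k} : Set ℕ) ⊆ Icc 1 n := hPik ▸ inter_subset_left.trans hPn
  have hi : 1 ≤ i := (hsub (by simp : i ∈ _)).1
  have hk : k ≤ n := (hsub (by simp : k ∈ _)).2
  have hik : Icc i k ⊆ Icc 1 n := Icc_subset_Icc hi hk
  have hinter : e '' P ∩ e '' Icc i k = e '' {i, j, k} := by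
    rw [← hPik]
    exact (hf.injOn.image_inter hPn hik).symm
  have htriple : connectivity M (e '' {i, j, k}) ≤ 2 := by
    rw [← hinter]
    refine hM.connectivity_inter_le (hf.image_subset_ground hPn) (hf.image_subset_ground hik)
      hconn (hf.connectivity_Icc_le hM hE hi hk) ?_ ?_
    · exact (hf.nontrivial_image_Icc hi (hij.trans hjk) hk).mono subset_union_right
    · exact hcompl.mono (sdiff_subset_sdiff_right (union_subset (image_mono hPn) (image_mono hik)))
  obtain ⟨t, hT⟩ := hM.exists_triOrTriad hE (hf.image_subset_ground hsub)
    (by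
      rw [hf.encard_image hsub, encard_eq_three]
      exact ⟨i, j, k, by omega, by omega, by omega, rfl⟩)
    htriple
  exact hf.eq_add_two_of_triOrTriad hM hE hi hij hjk hk
    (hcompl.mono (sdiff_subset_sdiff_right (image_mono hik))) hT

end IsFanFun

/-! ### Cyclic fans -/

section CyclicFan

variable {r : ℕ} {s w : ZMod r → α} {i j k l : ZMod r}

lemma mem_cycArc_iff [NeZero r] : k ∈ cycArc r i j ↔ (k - i).val < (j - i).val := by
  constructor
  · rintro ⟨m, hm, rfl⟩
    rwa [add_sub_cancel_left, ZMod.val_natCast_of_lt (hm.trans (ZMod.val_lt _))]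
  · exact fun h => ⟨_, h, by rw [ZMod.natCast_zmod_val, add_sub_cancel]⟩

lemma right_notMem_cycArc [NeZero r] : j ∉ cycArc r i j :=
  fun h => (mem_cycArc_iff.1 h).false

lemma left_mem_cycArc (hij : i ≠ j) : i ∈ cycArc r i j :=
  ⟨0, Nat.pos_of_ne_zero fun h => hij (sub_eq_zero.1 ((ZMod.val_eq_zero _).1 h)).symm, by simp⟩

lemma forall_of_forall_add_one [NeZero r] {P : ZMod r → Prop} (hi : P i)
    (h : ∀ j, P j → P (j + 1)) (j : ZMod r) : P j := by
  have hP : ∀ m : ℕ, P (i + m) := by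
    intro m
    induction m with
    | zero => simpa using hi
    | succ m ih => simpa [add_assoc] using h _ ih
  simpa using hP (j - i).val

/-- The circuit of a wheel consisting of the spokes `s i`, `s j` and the rim elements from `i`
to `j`. -/
def arcSet (s w : ZMod r → α) (i j : ZMod r) : Set α := {s i, s j} ∪ w '' cycArc r i j

/-- A cyclic fan `s 0, w 0, s 1, w 1, …` using every element of the ground set: three cyclically
consecutive elements form a triangle or a triad according to whether the middle one is some `w i`
or some `s i`. -/
structure IsCyclicFan (M : Matroid α) (s w : ZMod r → α) : Prop where
  two_le : 2 ≤ r
  injective : Function.Injective (Sum.elim s w)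
  ground_eq : M.E = range s ∪ range w
  isTriangle : ∀ i, IsTriangle M {s i, w i, s (i + 1)}
  isTriad : ∀ i, IsTriad M {w i, s (i + 1), w (i + 1)}

lemma IsTriangle.mem_closure {Z : Set α} (hT : IsTriangle M T) (hx : x ∈ T)
    (hZ : ∀ y ∈ T, y ≠ x → y ∈ M.closure Z) : x ∈ M.closure Z :=
  Matroid.closure_subset_closure_of_subset_closure (fun y hy => hZ y hy.1 hy.2)
    ((isCircuit_iff.1 hT.1).mem_closure_sdiff_singleton_of_mem hx)

lemma isCircuit_iff_mem_of_isAntichain {𝓕 : Set (Set α)} (hdep : ∀ F ∈ 𝓕, M.Dep F)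
    (hanti : IsAntichain (· ⊆ ·) 𝓕) (hsub : ∀ C, M.IsCircuit C → ∃ F ∈ 𝓕, F ⊆ C) (C : Set α) :
    M.IsCircuit C ↔ C ∈ 𝓕 := by
  constructor
  · intro hC
    obtain ⟨F, hF, hFC⟩ := hsub C hC
    rwa [← hC.eq_of_dep_subset (hdep F hF) hFC]
  · intro hC
    obtain ⟨D, hDC, hD⟩ := (hdep C hC).exists_isCircuit_subset
    obtain ⟨F, hF, hFD⟩ := hsub D hD
    obtain rfl := hanti.eq hF hC (hFD.trans hDC)
    rwa [hFD.antisymm hDC]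

namespace IsCyclicFan

lemma neZero (h : IsCyclicFan M s w) : NeZero r := ⟨by have := h.two_le; omega⟩

lemma spoke_inj (h : IsCyclicFan M s w) : s i = s j ↔ i = j :=
  ⟨fun hij => Sum.inl.inj (h.injective hij : Sum.inl i = Sum.inl j), congrArg s⟩

lemma rim_inj (h : IsCyclicFan M s w) : w i = w j ↔ i = j :=
  ⟨fun hij => Sum.inr.inj (h.injective hij : Sum.inr i = Sum.inr j), congrArg w⟩

lemma spoke_ne_rim (h : IsCyclicFan M s w) : s i ≠ w j :=
  fun hij => Sum.inl_ne_inr (h.injective hij : Sum.inl i = Sum.inr j)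

lemma spoke_notMem_range (h : IsCyclicFan M s w) : s i ∉ range w :=
  fun ⟨_, hj⟩ => h.spoke_ne_rim hj.symm

lemma spoke_mem_arcSet_iff (h : IsCyclicFan M s w) : s k ∈ arcSet s w i j ↔ k = i ∨ k = j := by
  simp [arcSet, h.spoke_inj, h.spoke_ne_rim.symm]

lemma rim_mem_arcSet_iff (h : IsCyclicFan M s w) : w k ∈ arcSet s w i j ↔ k ∈ cycArc r i j := by
  simp [arcSet, h.rim_inj, h.spoke_ne_rim.symm]

lemma eq_of_arcSet_subset (h : IsCyclicFan M s w) (hij : i ≠ j)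
    (hsub : arcSet s w i j ⊆ arcSet s w k l) : i = k ∧ j = l := by
  have := h.neZero
  have hi : i = k ∨ i = l := h.spoke_mem_arcSet_iff.1 (hsub (h.spoke_mem_arcSet_iff.2 (.inl rfl)))
  have hj : j = k ∨ j = l := h.spoke_mem_arcSet_iff.1 (hsub (h.spoke_mem_arcSet_iff.2 (.inr rfl)))
  have hil : i ≠ l := by
    rintro rfl
    exact right_notMem_cycArc
      (h.rim_mem_arcSet_iff.1 (hsub (h.rim_mem_arcSet_iff.2 (left_mem_cycArc hij))))
  grind

lemma not_range_rim_subset_arcSet (h : IsCyclicFan M s w) : ¬ range w ⊆ arcSet s w i j :=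
  have := h.neZero
  fun hsub => right_notMem_cycArc (h.rim_mem_arcSet_iff.1 (hsub (mem_range_self j)))

lemma spoke_mem_ground (h : IsCyclicFan M s w) : s i ∈ M.E :=
  h.ground_eq ▸ .inl (mem_range_self i)

lemma range_rim_subset_ground (h : IsCyclicFan M s w) : range w ⊆ M.E :=
  h.ground_eq ▸ subset_union_right

lemma arcSet_subset_ground (h : IsCyclicFan M s w) : arcSet s w i j ⊆ M.E :=
  union_subset (pair_subset h.spoke_mem_ground h.spoke_mem_ground)
    ((image_subset_range w _).trans h.range_rim_subset_ground)

lemma spoke_mem_closure (h : IsCyclicFan M s w) {Z : Set α} (hi : s i ∈ M.closure Z)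
    (hZ : ∀ k ∈ cycArc r i j, w k ∈ M.closure Z) : s j ∈ M.closure Z := by
  have := h.neZero
  have hs : ∀ m : ℕ, m ≤ (j - i).val → s (i + m) ∈ M.closure Z := by
    intro m
    induction m with
    | zero => simpa using hi
    | succ m ih =>
      intro hm
      rw [Nat.cast_succ, ← add_assoc]
      refine (h.isTriangle (i + m)).mem_closure (by simp) ?_
      rintro y (rfl | rfl | rfl) hy
      · exact ih (by omega)
      · exact hZ _ ⟨m, hm, rfl⟩
      · exact absurd rfl hy
  simpa using hs _ le_rfl

lemma arcSet_dep (h : IsCyclicFan M s w) (hij : i ≠ j) : M.Dep (arcSet s w i j) := by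
  refine (Matroid.not_indep_iff h.arcSet_subset_ground).1 fun hindep => ?_
  have hsub : arcSet s w i j \ {s j} ⊆ M.E := sdiff_subset.trans h.arcSet_subset_ground
  refine hindep.notMem_closure_sdiff_of_mem (h.spoke_mem_arcSet_iff.2 (.inr rfl))
    (h.spoke_mem_closure (i := i) ?_ fun k hk => ?_)
  · exact M.mem_closure_of_mem ⟨h.spoke_mem_arcSet_iff.2 (.inl rfl), mt h.spoke_inj.1 hij⟩ hsub
  · exact M.mem_closure_of_mem ⟨h.rim_mem_arcSet_iff.2 hk, h.spoke_ne_rim.symm⟩ hsub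

lemma insert_range_rim_dep (h : IsCyclicFan M s w) (i : ZMod r) :
    M.Dep (insert (s i) (range w)) := by
  have := h.neZero
  have hsub : insert (s i) (range w) ⊆ M.E :=
    insert_subset h.spoke_mem_ground h.range_rim_subset_ground
  refine (Matroid.not_indep_iff hsub).1 fun hindep => ?_
  set Z := insert (s i) (range w) \ {w (i - 1)}
  have hZ : Z ⊆ M.E := sdiff_subset.trans hsub
  have hi : s i ∈ M.closure Z := M.mem_closure_of_mem ⟨mem_insert _ _, h.spoke_ne_rim⟩ hZ
  have hpred : s (i - 1) ∈ M.closure Z := by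
    refine h.spoke_mem_closure hi fun k hk => M.mem_closure_of_mem ⟨.inr (mem_range_self k), ?_⟩ hZ
    intro hki
    exact right_notMem_cycArc (h.rim_inj.1 hki ▸ hk)
  refine hindep.notMem_closure_sdiff_of_mem (.inr (mem_range_self (i - 1)))
    ((h.isTriangle (i - 1)).mem_closure (by simp) ?_)
  rw [sub_add_cancel]
  rintro y (rfl | rfl | rfl) hy
  · exact hpred
  · exact absurd rfl hy
  · exact hi

lemma rim_mem_or_rim_mem_of_isCircuit (h : IsCyclicFan M s w) (hC : M.IsCircuit C)
    (hi : s i ∈ C) : w (i - 1) ∈ C ∨ w i ∈ C := by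
  have hK : M.IsCocircuit _ := isCircuit_iff.1 (h.isTriad (i - 1)).1
  rw [sub_add_cancel] at hK
  obtain ⟨y, ⟨hyC, rfl | rfl | rfl⟩, hy⟩ :=
    (hC.isCocircuit_inter_nontrivial hK ⟨s i, hi, by simp⟩).exists_ne (s i)
  exacts [.inl hyC, absurd rfl hy, .inr hyC]

lemma rim_mem_iff_rim_succ_mem_of_isCircuit (h : IsCyclicFan M s w) (hC : M.IsCircuit C)
    (hi : s (i + 1) ∉ C) : w i ∈ C ↔ w (i + 1) ∈ C := by
  have hK : M.IsCocircuit _ := isCircuit_iff.1 (h.isTriad i).1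
  constructor
  · intro hw
    obtain ⟨y, ⟨hyC, rfl | rfl | rfl⟩, hy⟩ :=
      (hC.isCocircuit_inter_nontrivial hK ⟨w i, hw, by simp⟩).exists_ne (w i)
    exacts [absurd rfl hy, absurd hyC hi, hyC]
  · intro hw
    obtain ⟨y, ⟨hyC, rfl | rfl | rfl⟩, hy⟩ :=
      (hC.isCocircuit_inter_nontrivial hK ⟨w (i + 1), hw, by simp⟩).exists_ne (w (i + 1))
    exacts [hyC, absurd hyC hi, absurd rfl hy]

lemma exists_spoke_mem_and_rim_mem (h : IsCyclicFan M s w) (hC : M.IsCircuit C) (hi : s i ∈ C) :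
    ∃ j, s j ∈ C ∧ w j ∈ C := by
  have := h.neZero
  by_contra! hnot
  have hrim : ∀ j, w j ∉ C := by
    refine forall_of_forall_add_one (hnot i hi) fun j hj => ?_
    by_cases hs : s (j + 1) ∈ C
    · exact hnot _ hs
    · exact mt (h.rim_mem_iff_rim_succ_mem_of_isCircuit hC hs).2 hj
  exact (h.rim_mem_or_rim_mem_of_isCircuit hC hi).elim (hrim _) (hrim _)

lemma exists_arcSet_subset (h : IsCyclicFan M s w) (hC : M.IsCircuit C) (hi : s i ∈ C)
    (hwi : w i ∈ C) (hex : ∃ j ≠ i, s j ∈ C) : ∃ j ≠ i, arcSet s w i j ⊆ C := by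
  have := h.neZero
  obtain ⟨j, ⟨hji, hj⟩, hmin⟩ := exists_min_image {j | j ≠ i ∧ s j ∈ C} (fun j => (j - i).val)
    (toFinite _) hex
  have hw : ∀ m : ℕ, m < (j - i).val → w (i + m) ∈ C := by
    intro m
    induction m with
    | zero => simpa using fun _ => hwi
    | succ m ih =>
      intro hm
      have hval : ((m + 1 : ℕ) : ZMod r).val = m + 1 :=
        ZMod.val_natCast_of_lt (hm.trans (ZMod.val_lt _))
      have hs : s (i + (m + 1 : ℕ)) ∉ C := by
        intro hs
        have hne : i + ((m + 1 : ℕ) : ZMod r) ≠ i := by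
          intro heq
          rw [add_eq_left.1 heq, ZMod.val_zero] at hval
          omega
        have hle := hmin _ ⟨hne, hs⟩
        simp only [add_sub_cancel_left, hval] at hle
        omega
      rw [Nat.cast_succ, ← add_assoc] at hs ⊢
      exact (h.rim_mem_iff_rim_succ_mem_of_isCircuit hC hs).1 (ih (by omega))
  refine ⟨j, hji, union_subset (pair_subset hi hj) ?_⟩
  rintro _ ⟨_, ⟨m, hm, rfl⟩, rfl⟩
  exact hw m hm

lemma exists_arcSet_subset_or_range_rim_subset (h : IsCyclicFan M s w) (hC : M.IsCircuit C) :
    (∃ i j, i ≠ j ∧ arcSet s w i j ⊆ C) ∨ range w ⊆ C := by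
  have := h.neZero
  by_cases hspoke : ∃ i, s i ∈ C
  · obtain ⟨_, hi⟩ := hspoke
    obtain ⟨i, hi, hwi⟩ := h.exists_spoke_mem_and_rim_mem hC hi
    by_cases hex : ∃ j ≠ i, s j ∈ C
    · obtain ⟨j, hji, hj⟩ := h.exists_arcSet_subset hC hi hwi hex
      exact .inl ⟨i, j, hji.symm, hj⟩
    · refine .inr (range_subset_iff.2 (forall_of_forall_add_one hwi fun j hj => ?_))
      by_cases hji : j + 1 = i
      · rwa [hji]
      · exact (h.rim_mem_iff_rim_succ_mem_of_isCircuit hC fun hs => hex ⟨_, hji, hs⟩).1 hj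
  · push Not at hspoke
    obtain ⟨x, hx⟩ := hC.nonempty
    obtain ⟨i, rfl⟩ | ⟨i, rfl⟩ := h.ground_eq ▸ hC.subset_ground hx
    · exact absurd hx (hspoke i)
    · exact .inr (range_subset_iff.2 (forall_of_forall_add_one hx fun j hj =>
        (h.rim_mem_iff_rim_succ_mem_of_isCircuit hC (hspoke _)).1 hj))

theorem isWheel_of_dep (h : IsCyclicFan M s w) (hrim : M.Dep (range w)) : IsWheel M := by
  refine ⟨r, h.two_le, s, w, h.injective, h.ground_eq, fun C => isCircuit_iff.trans ?_⟩
  refine isCircuit_iff_mem_of_isAntichain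
    (𝓕 := {C | C = range w ∨ ∃ i j, i ≠ j ∧ C = arcSet s w i j}) ?_ ?_ ?_ C
  · rintro _ (rfl | ⟨i, j, hij, rfl⟩)
    exacts [hrim, h.arcSet_dep hij]
  · rintro _ (rfl | ⟨i, j, hij, rfl⟩) _ (rfl | ⟨k, l, -, rfl⟩) hne hsub
    · exact hne rfl
    · exact h.not_range_rim_subset_arcSet hsub
    · exact h.spoke_notMem_range (hsub (h.spoke_mem_arcSet_iff.2 (.inl rfl)))
    · obtain ⟨rfl, rfl⟩ := h.eq_of_arcSet_subset hij hsub
      exact hne rfl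
  · intro C hC
    obtain ⟨i, j, hij, hsub⟩ | hsub := h.exists_arcSet_subset_or_range_rim_subset hC
    · exact ⟨_, .inr ⟨i, j, hij, rfl⟩, hsub⟩
    · exact ⟨_, .inl rfl, hsub⟩

theorem isWhirl_of_indep (h : IsCyclicFan M s w) (hrim : M.Indep (range w)) : IsWhirl M := by
  refine ⟨r, h.two_le, s, w, h.injective, h.ground_eq, fun C => isCircuit_iff.trans ?_⟩
  refine isCircuit_iff_mem_of_isAntichain
    (𝓕 := {C | (∃ i, C = insert (s i) (range w)) ∨ ∃ i j, i ≠ j ∧ C = arcSet s w i j})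
    ?_ ?_ ?_ C
  · rintro _ (⟨i, rfl⟩ | ⟨i, j, hij, rfl⟩)
    exacts [h.insert_range_rim_dep i, h.arcSet_dep hij]
  · have spoke_eq {i j : ZMod r} (hi : s i ∈ insert (s j) (range w)) : i = j :=
      h.spoke_inj.1 (hi.resolve_right h.spoke_notMem_range)
    rintro _ (⟨i, rfl⟩ | ⟨i, j, hij, rfl⟩) _ (⟨k, rfl⟩ | ⟨k, l, -, rfl⟩) hne hsub
    · exact hne (spoke_eq (hsub (mem_insert _ _)) ▸ rfl)
    · exact h.not_range_rim_subset_arcSet ((subset_insert _ _).trans hsub)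
    · exact hij ((spoke_eq (hsub (h.spoke_mem_arcSet_iff.2 (.inl rfl)))).trans
        (spoke_eq (hsub (h.spoke_mem_arcSet_iff.2 (.inr rfl)))).symm)
    · obtain ⟨rfl, rfl⟩ := h.eq_of_arcSet_subset hij hsub
      exact hne rfl
  · intro C hC
    obtain ⟨i, j, hij, hsub⟩ | hsub := h.exists_arcSet_subset_or_range_rim_subset hC
    · exact ⟨_, .inr ⟨i, j, hij, rfl⟩, hsub⟩
    · obtain ⟨x, hxC, hx⟩ : ∃ x ∈ C, x ∉ range w :=
        not_subset.1 fun hCw => hC.not_indep (hrim.subset hCw)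
      obtain ⟨i, rfl⟩ := (h.ground_eq ▸ hC.subset_ground hxC).resolve_right hx
      exact ⟨_, .inl ⟨i, rfl⟩, insert_subset hxC hsub⟩

theorem isWheel_or_isWhirl (h : IsCyclicFan M s w) : IsWheel M ∨ IsWhirl M := by
  by_cases hrim : M.Indep (range w)
  · exact .inr (h.isWhirl_of_indep hrim)
  · exact .inl (h.isWheel_of_dep ⟨hrim, h.range_rim_subset_ground⟩)

end IsCyclicFan

end CyclicFan

/-! ### Fans with at most one element outside -/

section CyclicLabelling

variable {r : ℕ}

lemma val_add_one_cases (hr : 2 ≤ r) (i : ZMod r) :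
    (i.val + 1 < r ∧ (i + 1).val = i.val + 1) ∨ (i.val + 1 = r ∧ (i + 1).val = 0) := by
  have : NeZero r := ⟨by omega⟩
  have : Fact (1 < r) := ⟨hr⟩
  rw [ZMod.val_add, ZMod.val_one]
  obtain h | h := Nat.lt_or_eq_of_le (Nat.succ_le_of_lt i.val_lt)
  · exact .inl ⟨h, Nat.mod_eq_of_lt h⟩
  · exact .inr ⟨h, by rw [← Nat.succ_eq_add_one, h, Nat.mod_self]⟩

variable [NeZero r]

lemma injective_sumElim_of_injOn (h : InjOn e (Icc 1 (2 * r))) :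
    Function.Injective
      (Sum.elim (fun i : ZMod r => e (2 * i.val + 1)) fun i : ZMod r => e (2 * i.val + 2)) := by
  rintro (i | i) (j | j) hij
  all_goals
    have hi := i.val_lt
    have hj := j.val_lt
    have heq := h (by simp only [mem_Icc]; omega) (by simp only [mem_Icc]; omega) hij
  · exact congrArg _ (ZMod.val_injective r (by omega))
  · omega
  · omega
  · exact congrArg _ (ZMod.val_injective r (by omega))

lemma range_union_range_eq_image_Icc :
    (range fun i : ZMod r => e (2 * i.val + 1)) ∪ (range fun i : ZMod r => e (2 * i.val + 2)) =
      e '' Icc 1 (2 * r) := by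
  refine subset_antisymm (union_subset ?_ ?_) ?_
  · rintro _ ⟨i, rfl⟩
    have := i.val_lt
    exact mem_image_of_mem e (by simp only [mem_Icc]; omega)
  · rintro _ ⟨i, rfl⟩
    have := i.val_lt
    exact mem_image_of_mem e (by simp only [mem_Icc]; omega)
  · rintro _ ⟨p, hp, rfl⟩
    simp only [mem_Icc] at hp
    have hval : (((p - 1) / 2 : ℕ) : ZMod r).val = (p - 1) / 2 :=
      ZMod.val_natCast_of_lt (by omega)
    obtain hodd | heven := Nat.mod_two_eq_zero_or_one (p - 1)
    · exact .inl ⟨_, congrArg e (by rw [hval]; omega)⟩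
    · exact .inr ⟨_, congrArg e (by rw [hval]; omega)⟩

end CyclicLabelling

namespace IsFanFun

variable {k : ℕ}

/-- The triple of the fan that ends in `e (k + 1)` meets `T` only there, so both are of the same
kind; if the interval is too short to contain the rest of that triple, `T` is of both kinds. -/
lemma triOrTriad_of_compl_eq_image_Icc [M.RankFinite] (hf : IsFanFun M b n e) (hM : ThreeConn M)
    (hE : 4 ≤ M.E.encard) (hT : T ⊆ M.E) (hcard : T.encard = 3) {i : ℕ} (hi : 1 ≤ i)
    (hk : k + 1 ≤ n) (hcompl : M.E \ T = e '' Icc i k) (hkT : e (k + 1) ∈ T) :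
    TriOrTriad M (posBool b (k + 1)) T := by
  obtain hle | hlt := le_or_gt k i
  · refine hM.triOrTriad_of_connectivity_le_one hE hT hcard
      (connectivity_le_of_encard_compl_le (k := 1) hT ?_) _
    rw [hcompl, Nat.cast_one, encard_le_one_iff_subsingleton]
    refine Set.Subsingleton.image (fun p hp q hq => ?_) e
    exact le_antisymm (by grind) (by grind)
  · obtain ⟨l, rfl⟩ : ∃ l, k = l + 1 := ⟨k - 1, by omega⟩
    have hnotMem : ∀ j ∈ Icc i (l + 1), e j ∉ T := fun j hj =>
      (hcompl.ge (mem_image_of_mem e hj) : e j ∈ M.E \ T).2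
    obtain ⟨t, ht⟩ := hM.exists_triOrTriad hE hT hcard (by
      rw [← connectivity_compl hT, hcompl]
      exact hf.connectivity_Icc_le hM hE hi (by omega))
    have hinter : e '' Icc l (l + 2) ∩ T = {e (l + 2)} := by
      refine subset_antisymm ?_ (singleton_subset_iff.2 ⟨mem_image_of_mem e (by simp), hkT⟩)
      rintro _ ⟨⟨j, hj, rfl⟩, hjT⟩
      have hji : j ∉ Icc i (l + 1) := fun h => hnotMem j h hjT
      simp only [mem_Icc] at hj hji
      rw [mem_singleton_iff, show j = l + 2 by omega]
    have hkind := (hf.triOrTriad_Icc (by omega) hk).eq_of_inter_eq_singleton ht hinter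
    rwa [← hkind, posBool_eq_posBool_iff.2 (by omega : l % 2 = (l + 1 + 1) % 2)] at ht

lemma triOrTriad_last_first [M.RankFinite] (hf : IsFanFun M b n e) (hM : ThreeConn M)
    (hE : 4 ≤ M.E.encard) (hn : 4 ≤ n) (hfull : e '' Icc 1 n = M.E) :
    TriOrTriad M (posBool b (n - 1)) (e '' {n - 1, n, 1}) := by
  have hsub : ({n - 1, n, 1} : Set ℕ) ⊆ Icc 1 n := by
    rintro _ (rfl | rfl | rfl) <;> simp only [mem_Icc] <;> omega
  rw [show n - 1 = n - 2 + 1 by omega] at hsub ⊢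
  refine hf.triOrTriad_of_compl_eq_image_Icc hM hE (i := 2) (hf.image_subset_ground hsub) ?_
    (by omega) (by omega) ?_ (mem_image_of_mem e (by simp))
  · rw [hf.encard_image hsub, encard_eq_three]
    exact ⟨_, _, _, by omega, by omega, by omega, rfl⟩
  · rw [← hfull, ← hf.injOn.image_sdiff_subset hsub]
    congr 1
    ext; simp only [mem_sdiff, mem_Icc, mem_insert_iff, mem_singleton_iff]; omega

lemma even_of_image_eq_ground [M.RankFinite] (hf : IsFanFun M b n e) (hM : ThreeConn M)
    (hE : 4 ≤ M.E.encard) (hn : 4 ≤ n) (hfull : e '' Icc 1 n = M.E) : Even n := by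
  rw [Nat.even_iff]
  by_contra hodd
  have hinter : Icc 1 (1 + 2) ∩ {n - 1, n, 1} = {1} := by
    ext; simp only [mem_Icc, mem_inter_iff, mem_insert_iff, mem_singleton_iff]; omega
  have hsub : ({n - 1, n, 1} : Set ℕ) ⊆ Icc 1 n := by
    rintro _ (rfl | rfl | rfl) <;> simp only [mem_Icc] <;> omega
  have hkind := (hf.triOrTriad_Icc (i := 1) le_rfl (by omega)).eq_of_inter_eq_singleton
    (x := e 1) (hf.triOrTriad_last_first hM hE hn hfull) (by
      rw [← hf.injOn.image_inter (Icc_subset_Icc le_rfl (by omega)) hsub, hinter,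
        image_singleton])
  have := posBool_eq_posBool_iff.1 hkind
  omega

lemma triOrTriad_last_first_second [M.RankFinite] (hf : IsFanFun M b n e) (hM : ThreeConn M)
    (hE : 4 ≤ M.E.encard) (hn : 4 ≤ n) (hfull : e '' Icc 1 n = M.E) :
    TriOrTriad M (posBool b 2) (e '' {n, 1, 2}) := by
  have h := hf.reverse.triOrTriad_last_first hM hE hn ((image_Icc_one_reverse e n).trans hfull)
  have himage : (fun j => e (n + 1 - j)) '' {n - 1, n, 1} = e '' {n, 1, 2} := by
    simp only [image_insert_eq, image_singleton, Nat.add_sub_cancel, Nat.add_sub_cancel_left,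
      show n + 1 - (n - 1) = 2 by omega]
    rw [pair_comm, insert_comm, pair_comm]
  rwa [himage, show n - 1 = n + 1 - 2 by omega, posBool_posBool_reverse (by omega)] at h

lemma isCyclicFan [M.RankFinite] {r : ℕ} (hf : IsFanFun M true (2 * r) e) (hM : ThreeConn M)
    (hE : 4 ≤ M.E.encard) (hr : 2 ≤ r) (hfull : e '' Icc 1 (2 * r) = M.E) :
    IsCyclicFan M (fun i : ZMod r => e (2 * i.val + 1)) (fun i => e (2 * i.val + 2)) := by
  have : NeZero r := ⟨by omega⟩
  refine ⟨hr, injective_sumElim_of_injOn hf.injOn, ?_, fun i => ?_, fun i => ?_⟩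
  · rw [range_union_range_eq_image_Icc, hfull]
  · obtain ⟨hlt, hval⟩ | ⟨hlast, hval⟩ := val_add_one_cases hr i
    · have h := hf.2.2.2 (2 * i.val + 1) (by omega) (by omega)
      rw [posBool_eq_posBool_iff.2 (by omega : (2 * i.val + 1) % 2 = 1 % 2)] at h
      rwa [hval]
    · have h := hf.triOrTriad_last_first hM hE (by omega) hfull
      rw [posBool_eq_posBool_iff.2 (by omega : (2 * r - 1) % 2 = 1 % 2), image_insert_eq,
        image_pair] at h
      rwa [hval, show 2 * i.val + 1 = 2 * r - 1 by omega, show 2 * i.val + 2 = 2 * r by omega]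
  · obtain ⟨hlt, hval⟩ | ⟨hlast, hval⟩ := val_add_one_cases hr i
    · have h := hf.2.2.2 (2 * i.val + 2) (by omega) (by omega)
      rw [posBool_eq_posBool_iff.2 (by omega : (2 * i.val + 2) % 2 = 2 % 2)] at h
      rwa [hval]
    · have h := hf.triOrTriad_last_first_second hM hE (by omega) hfull
      rw [image_insert_eq, image_pair] at h
      rwa [hval, show 2 * i.val + 2 = 2 * r by omega]

theorem isWheel_or_isWhirl_of_image_eq_ground [M.RankFinite] (hf : IsFanFun M b n e)
    (hM : ThreeConn M) (hE : 4 ≤ M.E.encard) (hfull : e '' Icc 1 n = M.E) :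
    IsWheel M ∨ IsWhirl M := by
  have hn : 4 ≤ n := by
    rw [← hfull, hf.encard_image subset_rfl, ← Finset.coe_Icc, encard_coe_eq_coe_finsetCard,
      Nat.card_Icc] at hE
    exact_mod_cast hE
  obtain ⟨r, rfl⟩ := even_iff_exists_two_mul.1 (hf.even_of_image_eq_ground hM hE hn hfull)
  obtain rfl | rfl := b.eq_false_or_eq_true.symm
  · have hrev := hf.reverse
    rw [show posBool false (2 * r) = true by simp [posBool]] at hrev
    have hfull_rev := (image_Icc_one_reverse e (2 * r)).trans hfull
    exact (hrev.isCyclicFan hM hE (by omega) hfull_rev).isWheel_or_isWhirl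
  · exact (hf.isCyclicFan hM hE (by omega) hfull).isWheel_or_isWhirl

lemma triOrTriad_insert_last [M.RankFinite] (hf : IsFanFun M b n e) (hM : ThreeConn M)
    (hE : 4 ≤ M.E.encard) {z : α} (hz : M.E \ e '' Icc 1 n = {z}) :
    TriOrTriad M (posBool b (n - 1)) {e (n - 1), e n, z} := by
  obtain ⟨k, rfl⟩ : ∃ k, n = k + 2 := ⟨n - 2, by have := hf.1; omega⟩
  obtain ⟨hzE, hzn⟩ : z ∈ M.E \ e '' Icc 1 (k + 2) := hz ▸ rfl
  have hsub : ({k + 1, k + 2} : Set ℕ) ⊆ Icc 1 (k + 2) := by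
    rintro _ (rfl | rfl) <;> simp only [mem_Icc] <;> omega
  have hT : ({e (k + 1), e (k + 2), z} : Set α) = insert z (e '' {k + 1, k + 2}) := by
    rw [image_pair, insert_comm z, pair_comm z]
  rw [show k + 2 - 1 = k + 1 from rfl, hT]
  refine hf.triOrTriad_of_compl_eq_image_Icc hM hE (i := 1) ?_ ?_ le_rfl (by omega) ?_
    (.inr (mem_image_of_mem e (by simp)))
  · exact insert_subset hzE (hf.image_subset_ground hsub)
  · rw [encard_insert_of_notMem (mt (image_mono hsub ·) hzn), hf.encard_image hsub,
      encard_pair (by omega)]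
    rfl
  · rw [← singleton_union, ← hz, ← sdiff_sdiff,
      sdiff_sdiff_cancel_left (hf.image_subset_ground subset_rfl),
      ← hf.injOn.image_sdiff_subset hsub]
    congr 1
    ext; simp only [mem_sdiff, mem_Icc, mem_insert_iff, mem_singleton_iff]; omega

lemma update_succ [M.RankFinite] (hf : IsFanFun M b n e) (hM : ThreeConn M)
    (hE : 4 ≤ M.E.encard) {z : α} (hz : M.E \ e '' Icc 1 n = {z}) :
    IsFanFun M b (n + 1) (Function.update e (n + 1) z) := by
  have hn := hf.1
  obtain ⟨hzE, hzn⟩ : z ∈ M.E \ e '' Icc 1 n := hz ▸ rfl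
  have hupdate {i : ℕ} (hi : i ≤ n) : Function.update e (n + 1) z i = e i :=
    Function.update_of_ne (by omega) _ _
  have hne {i : ℕ} (hi : 1 ≤ i) (hin : i ≤ n) : e i ≠ z :=
    fun h => hzn (h ▸ mem_image_of_mem e ⟨hi, hin⟩)
  refine ⟨by omega, fun i j hi hin hj hjn h => ?_, fun i hi hin => ?_, fun i hi hin => ?_⟩
  · obtain rfl | hin := eq_or_lt_of_le hin <;> obtain rfl | hjn := eq_or_lt_of_le hjn
    · rfl
    · rw [Function.update_self, hupdate (by omega)] at h
      exact absurd h.symm (hne hj (by omega))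
    · rw [Function.update_self, hupdate (by omega)] at h
      exact absurd h (hne hi (by omega))
    · rw [hupdate (by omega), hupdate (by omega)] at h
      exact hf.2.1 i j hi (by omega) hj (by omega) h
  · obtain rfl | hin := eq_or_lt_of_le hin
    · rwa [Function.update_self]
    · rw [hupdate (by omega)]
      exact hf.2.2.1 i hi (by omega)
  · obtain heq | hlt := eq_or_lt_of_le hin
    · obtain rfl : n = i + 1 := by omega
      rw [Function.update_self, hupdate (by omega), hupdate (by omega)]
      exact hf.triOrTriad_insert_last hM hE hz
    · rw [hupdate (by omega), hupdate (by omega), hupdate (by omega)]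
      exact hf.2.2.2 i hi (by omega)

theorem isWheel_or_isWhirl_of_subsingleton [M.RankFinite] (hf : IsFanFun M b n e)
    (hM : ThreeConn M) (hE : 4 ≤ M.E.encard) (h : (M.E \ e '' Icc 1 n).Subsingleton) :
    IsWheel M ∨ IsWhirl M := by
  have hsub := hf.image_subset_ground (Subset.refl (Icc 1 n))
  obtain hempty | ⟨z, hz⟩ := h.eq_empty_or_singleton
  · exact hf.isWheel_or_isWhirl_of_image_eq_ground hM hE
      (hsub.antisymm (sdiff_eq_empty.1 hempty))
  · refine (hf.update_succ hM hE hz).isWheel_or_isWhirl_of_image_eq_ground hM hE ?_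
    rw [image_update_Icc, ← singleton_union, ← hz, sdiff_union_of_subset hsub]

end IsFanFun

end PaperDefs

/-- Any 3-separating subset (of size at least three) of a fan of a 3-connected matroid
(with at least four elements, and neither a wheel nor a whirl) consists of consecutive
elements of the fan. -/
theorem statement14 (M : Matroid α) (hM3 : ThreeConn M) (hcard : 4 ≤ M.E.encard)
    (hW : ¬ IsWheel M) (hWh : ¬ IsWhirl M)
    (b : Bool) (n : ℕ) (e : ℕ → α) (hfan : IsFanFun M b n e)
    (X : Set α) (hXsub : X ⊆ fanSet n e)
    (hXsep : erk M X + erk M (M.E \ X) ≤ erk M M.E + 2)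
    (hXcard : 3 ≤ X.encard) :
    ∃ x y, 1 ≤ x ∧ x < y ∧ y ≤ n ∧ X = e '' Set.Icc x y := by
  have := hM3.rankFinite hcard
  have hcompl : (M.E \ e '' Icc 1 n).Nontrivial := by
    rw [← not_subsingleton_iff]
    exact fun h => (hfan.isWheel_or_isWhirl_of_subsingleton hM3 hcard h).elim hW hWh
  rw [fanSet_eq_image] at hXsub
  obtain ⟨S, hS, rfl⟩ := subset_image_iff.1 hXsub
  obtain ⟨P, rfl⟩ := ((finite_Icc 1 n).subset hS).exists_finset_coe
  rw [hfan.encard_image hS, encard_coe_eq_coe_finsetCard] at hXcard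
  obtain ⟨x, y, hxy, rfl⟩ := hfan.exists_eq_Icc_of_connectivity_le hM3 hcard hcompl hS
    (by exact_mod_cast hXcard) (connectivity_le_iff.2 hXsep)
  rw [Finset.coe_Icc] at hS ⊢
  exact ⟨x, y, (hS (left_mem_Icc.2 hxy.le)).1, hxy, (hS (right_mem_Icc.2 hxy.le)).2, rfl⟩
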